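/- For any ε ∈ [0,1] and any two distinct i-faces F and F' of a connected abstract simplicial complex K with weight function w, the ε-Ricci curvature satisfies κ_ε(F, F') ≤ (ε/d(F, F'))·( 2 − (1/(i+1)) Σ_{E ∈ ∂F} w(F)/deg E − (1/(i+1)) Σ_{E ∈ ∂F'} w(F')/deg E ). -/

import Mathlib

/-!
The bound is the easy half of Kantorovich duality, done by hand. For a coupling `A` of `m_F` and
`m_{F'}`, the triangle inequality `d(F,F') ≤ d(F,G) + d(G,G') + d(G',F')`, averaged against
`A(G,G')`, gives
`d(F,F') ≤ Σ m_F(G) d(F,G) + cost(A) + Σ m_{F'}(G') d(G',F')`.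
The measure `m_F` lives on `F` and its neighbours, which are at distance at most one, so
`Σ m_F(G) d(F,G) ≤ 1 - m_F(F)` (`sum_pm_mul_le`), and `1 - m_F(F)` is
`ε (1 - (1/(i+1)) Σ_{E ∈ ∂F} w(F)/deg E)`.

Two facts are needed: `m_F` is a probability measure (`sum_pm`, `pm_nonneg`), which comes
from exchanging the sums over `E ∈ ∂F` and over the `i`-faces containing `E`; and
couplings exist (the product one), so that the infimum defining `W` is not the
junk value at the empty set.
-/

open Finset Filter

namespace SCRicci

variable {V : Type*}

/-- `K` is an abstract simplicial complex: faces are nonempty finite sets and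
nonempty subsets of faces are again faces. -/
def IsComplex [DecidableEq V] (K : Finset (Finset V)) : Prop :=
  ∀ F ∈ K, F.Nonempty ∧ ∀ E : Finset V, E ⊆ F → E.Nonempty → E ∈ K

/-- The set `S_i(K)` of `i`-faces of `K` (faces of cardinality `i+1`). -/
def faces [DecidableEq V] (K : Finset (Finset V)) (i : ℕ) : Finset (Finset V) :=
  K.filter fun F => F.card = i + 1

/-- Two `i`-faces are connected, `F ~ F'`, if they are distinct and share a common
`(i-1)`-face, which is necessarily `F ∩ F'`. -/
def Conn [DecidableEq V] (i : ℕ) (F F' : Finset V) : Prop :=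
  F ≠ F' ∧ (F ∩ F').card = i

noncomputable section

/-- The degree of an `(i-1)`-face `E`: the sum of the weights of the `i`-faces
containing `E`. -/
def deg [DecidableEq V] (K : Finset (Finset V)) (w : Finset V → ℝ) (i : ℕ)
    (E : Finset V) : ℝ :=
  ∑ F ∈ faces K i, if E ⊆ F then w F else 0

/-- `Chain K i n F F'`: there is a path of length `n` of consecutively connected
`i`-faces from `F` to `F'`. -/
def Chain [DecidableEq V] (K : Finset (Finset V)) (i : ℕ) :
    ℕ → Finset V → Finset V → Prop
  | 0, F, F' => F = F'
  | n + 1, F, F' => ∃ G ∈ faces K i, Conn i F G ∧ Chain K i n G F'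

/-- The distance between two `i`-faces: the length of a shortest path of
consecutively connected `i`-faces. -/
def fdist [DecidableEq V] (K : Finset (Finset V)) (i : ℕ) (F F' : Finset V) : ℕ :=
  sInf {n | Chain K i n F F'}

/-- `K` is connected in dimension `i`: any two `i`-faces are joined by a path of
consecutively connected `i`-faces. -/
def ComplexConnected [DecidableEq V] (K : Finset (Finset V)) (i : ℕ) : Prop :=
  ∀ F ∈ faces K i, ∀ F' ∈ faces K i, ∃ n, Chain K i n F F'

/-- The probability measure `m_F^ε` on the `i`-faces of `K`. -/
def pm [DecidableEq V] (K : Finset (Finset V)) (w : Finset V → ℝ) (i : ℕ) (ε : ℝ)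
    (F F' : Finset V) : ℝ :=
  if F' = F then
    1 - ε + ε / ((i : ℝ) + 1) * ∑ E ∈ F.powersetCard i, w F / deg K w i E
  else if F' ∈ faces K i ∧ (F ∩ F').card = i then
    ε * w F' / (((i : ℝ) + 1) * deg K w i (F ∩ F'))
  else 0

/-- The 1-Wasserstein distance between two measures on the `i`-faces of `K`:
the infimum of the transport cost over all couplings. -/
def Wass [DecidableEq V] (K : Finset (Finset V)) (i : ℕ) (μ ν : Finset V → ℝ) : ℝ :=
  sInf {c : ℝ | ∃ A : Finset V → Finset V → ℝ,
    (∀ F₁ F₂, 0 ≤ A F₁ F₂) ∧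
    (∀ F₁ ∈ faces K i, ∑ F₂ ∈ faces K i, A F₁ F₂ = μ F₁) ∧
    (∀ F₂ ∈ faces K i, ∑ F₁ ∈ faces K i, A F₁ F₂ = ν F₂) ∧
    c = ∑ F₁ ∈ faces K i, ∑ F₂ ∈ faces K i, A F₁ F₂ * (fdist K i F₁ F₂ : ℝ)}

/-- The `ε`-Ricci curvature of two distinct `i`-faces:
`κ_ε(F, F') = 1 - W(m_F^ε, m_{F'}^ε) / d(F, F')`. -/
def kappaEps [DecidableEq V] (K : Finset (Finset V)) (w : Finset V → ℝ) (i : ℕ)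
    (ε : ℝ) (F F' : Finset V) : ℝ :=
  1 - Wass K i (pm K w i ε F) (pm K w i ε F') / (fdist K i F F' : ℝ)

/-- The Ricci curvature `κ(F, F')`: the limit of `κ_ε(F, F') / ε` as `ε → 0+`. -/
def ricci [DecidableEq V] (K : Finset (Finset V)) (w : Finset V → ℝ) (i : ℕ)
    (F F' : Finset V) : ℝ :=
  limUnder (nhdsWithin (0 : ℝ) (Set.Ioi 0)) fun ε => kappaEps K w i ε F F' / ε

section Aux

variable [DecidableEq V] {K : Finset (Finset V)} {w : Finset V → ℝ} {i : ℕ}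

theorem Chain.append {m n : ℕ} {F G H : Finset V} (h₁ : Chain K i m F G)
    (h₂ : Chain K i n G H) : Chain K i (m + n) F H := by
  induction m generalizing F with
  | zero =>
    obtain rfl : F = G := h₁
    simpa using h₂
  | succ m ih =>
    obtain ⟨F₁, hF₁, hc, h⟩ := h₁
    rw [Nat.add_right_comm]
    exact ⟨F₁, hF₁, hc, ih h⟩

theorem chain_fdist (hconn : ComplexConnected K i) {F G : Finset V} (hF : F ∈ faces K i)
    (hG : G ∈ faces K i) : Chain K i (fdist K i F G) F G :=
  Nat.sInf_mem (s := {n | Chain K i n F G}) (hconn F hF G hG)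

theorem fdist_triangle (hconn : ComplexConnected K i) {F G H : Finset V} (hF : F ∈ faces K i)
    (hG : G ∈ faces K i) (hH : H ∈ faces K i) :
    fdist K i F H ≤ fdist K i F G + fdist K i G H :=
  Nat.sInf_le ((chain_fdist hconn hF hG).append (chain_fdist hconn hG hH))

theorem fdist_self (F : Finset V) : fdist K i F F = 0 :=
  Nat.le_zero.mp (Nat.sInf_le (show Chain K i 0 F F from rfl))

theorem fdist_le_one {F G : Finset V} (hG : G ∈ faces K i) (h : Conn i F G) :
    fdist K i F G ≤ 1 :=
  Nat.sInf_le (show Chain K i 1 F G from ⟨G, hG, h, rfl⟩)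

theorem Conn.symm {F G : Finset V} (h : Conn i F G) : Conn i G F :=
  ⟨h.1.symm, by rw [inter_comm]; exact h.2⟩

theorem deg_nonneg (hwpos : ∀ F ∈ K, 0 < w F) (E : Finset V) : 0 ≤ deg K w i E := by
  refine sum_nonneg fun G hG => ?_
  split_ifs
  · exact (hwpos G (mem_filter.mp hG).1).le
  · exact le_rfl

theorem deg_pos (hwpos : ∀ F ∈ K, 0 < w F) {E F : Finset V} (hF : F ∈ faces K i)
    (hE : E ⊆ F) : 0 < deg K w i E := by
  refine sum_pos' (fun G hG => ?_) ⟨F, hF, ?_⟩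
  · split_ifs
    · exact (hwpos G (mem_filter.mp hG).1).le
    · exact le_rfl
  · rw [if_pos hE]
    exact hwpos F (mem_filter.mp hF).1

theorem pm_nonneg (hwpos : ∀ F ∈ K, 0 < w F) {ε : ℝ} (hε : ε ∈ Set.Icc (0 : ℝ) 1)
    {F : Finset V} (hF : F ∈ faces K i) (G : Finset V) : 0 ≤ pm K w i ε F G := by
  obtain ⟨h0, h1⟩ := hε
  have hi1 : (0 : ℝ) < (i : ℝ) + 1 := by positivity
  unfold pm
  split_ifs with h h'
  · have hs : 0 ≤ ∑ E ∈ F.powersetCard i, w F / deg K w i E :=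
      sum_nonneg fun E _ =>
        div_nonneg (hwpos F (mem_filter.mp hF).1).le (deg_nonneg hwpos E)
    have : 0 ≤ ε / ((i : ℝ) + 1) * ∑ E ∈ F.powersetCard i, w F / deg K w i E := by
      positivity
    linarith
  · exact div_nonneg (mul_nonneg h0 (hwpos G (mem_filter.mp h'.1).1).le)
      (mul_nonneg hi1.le (deg_nonneg hwpos _))
  · exact le_rfl

/-- A face `G ≠ F` contains at most one facet of `F`, namely `F ∩ G` when it has the right
cardinality. -/
theorem sum_facets_of_ne {F G : Finset V} (hF : F ∈ faces K i) (hG : G ∈ faces K i)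
    (hne : G ≠ F) (f : Finset V → ℝ) :
    (∑ E ∈ F.powersetCard i, if E ⊆ G then f E else 0)
      = if (F ∩ G).card = i then f (F ∩ G) else 0 := by
  have hFc : F.card = i + 1 := (mem_filter.mp hF).2
  have hGc : G.card = i + 1 := (mem_filter.mp hG).2
  have hle : (F ∩ G).card ≤ i := by
    by_contra hlt
    have h1 : F ∩ G = F := eq_of_subset_of_card_le inter_subset_left (by omega)
    have h2 : F ∩ G = G := eq_of_subset_of_card_le inter_subset_right (by omega)
    exact hne (h2.symm.trans h1)
  have key : ∀ E ∈ F.powersetCard i, E ⊆ G → E = F ∩ G := fun E hE hEG => by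
    obtain ⟨hEF, hEc⟩ := mem_powersetCard.mp hE
    exact eq_of_subset_of_card_le (subset_inter hEF hEG) (by omega)
  split_ifs with hc
  · rw [sum_eq_single (F ∩ G)]
    · rw [if_pos inter_subset_right]
    · intro E hE hEne
      exact if_neg fun hEG => hEne (key E hE hEG)
    · intro h
      exact absurd (mem_powersetCard.mpr ⟨inter_subset_left, hc⟩) h
  · refine sum_eq_zero fun E hE => if_neg fun hEG => hc ?_
    rw [← key E hE hEG]
    exact (mem_powersetCard.mp hE).2

/-- `m_F` is the lazy version of the walk that picks a uniform facet `E` of `F` and then an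
`i`-face containing `E` with probability proportional to its weight. -/
theorem pm_eq {ε : ℝ} {F G : Finset V} (hF : F ∈ faces K i) (hG : G ∈ faces K i) :
    pm K w i ε F G = (if G = F then 1 - ε else 0) + ε / ((i : ℝ) + 1) *
      ∑ E ∈ F.powersetCard i, if E ⊆ G then w G / deg K w i E else 0 := by
  unfold pm
  by_cases h : G = F
  · subst h
    rw [if_pos rfl, if_pos rfl]
    congr 2
    exact sum_congr rfl fun E hE => (if_pos (mem_powersetCard.mp hE).1).symm
  · rw [if_neg h, if_neg h, sum_facets_of_ne hF hG h fun E => w G / deg K w i E]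
    simp only [hG, true_and]
    split_ifs
    · rw [div_mul_div_comm, zero_add]
    · simp

theorem sum_pm (hwpos : ∀ F ∈ K, 0 < w F) {ε : ℝ} {F : Finset V} (hF : F ∈ faces K i) :
    ∑ G ∈ faces K i, pm K w i ε F G = 1 := by
  have hi1 : (i : ℝ) + 1 ≠ 0 := by positivity
  have hFc : F.card = i + 1 := (mem_filter.mp hF).2
  rw [sum_congr rfl fun G hG => pm_eq (w := w) (ε := ε) hF hG, sum_add_distrib, ← mul_sum,
    sum_comm, sum_ite_eq' (faces K i) F, if_pos hF]
  have h1 : ∀ E ∈ F.powersetCard i,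
      (∑ G ∈ faces K i, if E ⊆ G then w G / deg K w i E else 0) = 1 := fun E hE => by
    have hpos := deg_pos hwpos hF (mem_powersetCard.mp hE).1
    calc (∑ G ∈ faces K i, if E ⊆ G then w G / deg K w i E else 0)
        = (∑ G ∈ faces K i, if E ⊆ G then w G else 0) / deg K w i E := by
          rw [sum_div]
          exact sum_congr rfl fun G _ => by split_ifs <;> simp
      _ = 1 := div_self hpos.ne'
  rw [sum_congr rfl h1, sum_const, card_powersetCard, hFc, Nat.choose_succ_self_right,
    nsmul_eq_mul, mul_one]
  push_cast
  field_simp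
  ring

/-- The mean of a function vanishing at `F` and at most one on the neighbours of `F` is at most
the mass `m_F` puts away from `F`. -/
theorem sum_pm_mul_le (hwpos : ∀ F ∈ K, 0 < w F) {ε : ℝ} (hε : ε ∈ Set.Icc (0 : ℝ) 1)
    {F : Finset V} (hF : F ∈ faces K i) (f : Finset V → ℝ) (h0 : f F = 0)
    (h1 : ∀ G ∈ faces K i, Conn i F G → f G ≤ 1) :
    ∑ G ∈ faces K i, pm K w i ε F G * f G ≤ 1 - pm K w i ε F F := by
  rw [← sum_pm (w := w) (ε := ε) hwpos hF, ← add_sum_erase _ _ hF,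
    ← add_sum_erase (faces K i) (pm K w i ε F) hF, h0, mul_zero, zero_add, add_sub_cancel_left]
  refine sum_le_sum fun G hG => ?_
  obtain ⟨hGF, hG⟩ := mem_erase.mp hG
  by_cases hc : (F ∩ G).card = i
  · exact mul_le_of_le_one_right (pm_nonneg hwpos hε hF G) (h1 G hG ⟨hGF.symm, hc⟩)
  · have : pm K w i ε F G = 0 := by simp [pm, hGF, hc]
    simp [this]

/-- The lower bound on the Wasserstein distance equivalent to the curvature bound. -/
theorem le_Wass (hconn : ComplexConnected K i) (hwpos : ∀ F ∈ K, 0 < w F)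
    {ε : ℝ} (hε : ε ∈ Set.Icc (0 : ℝ) 1) {F F' : Finset V} (hF : F ∈ faces K i)
    (hF' : F' ∈ faces K i) :
    (fdist K i F F' : ℝ) - (1 - pm K w i ε F F) - (1 - pm K w i ε F' F')
      ≤ Wass K i (pm K w i ε F) (pm K w i ε F') := by
  refine le_csInf ?_ ?_
  · -- the product coupling
    refine ⟨_, fun G G' => pm K w i ε F G * pm K w i ε F' G', fun G G' =>
      mul_nonneg (pm_nonneg hwpos hε hF G) (pm_nonneg hwpos hε hF' G'), fun G _ => ?_,
      fun G' _ => ?_, rfl⟩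
    · rw [← mul_sum, sum_pm hwpos hF', mul_one]
    · rw [← sum_mul, sum_pm hwpos hF, one_mul]
  · rintro c ⟨A, hA, hrow, hcol, rfl⟩
    have hmass : ∑ G ∈ faces K i, ∑ G' ∈ faces K i, A G G' = 1 := by
      rw [sum_congr rfl hrow, sum_pm hwpos hF]
    have hleft : ∑ G ∈ faces K i, ∑ G' ∈ faces K i, A G G' * (fdist K i F G : ℝ)
        ≤ 1 - pm K w i ε F F := by
      calc _ = ∑ G ∈ faces K i, pm K w i ε F G * (fdist K i F G : ℝ) :=
            sum_congr rfl fun G hG => by rw [← sum_mul, hrow G hG]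
        _ ≤ _ := sum_pm_mul_le hwpos hε hF _ (by rw [fdist_self, Nat.cast_zero])
            fun G hG h => by exact_mod_cast fdist_le_one hG h
    have hright : ∑ G ∈ faces K i, ∑ G' ∈ faces K i, A G G' * (fdist K i G' F' : ℝ)
        ≤ 1 - pm K w i ε F' F' := by
      rw [sum_comm]
      calc _ = ∑ G' ∈ faces K i, pm K w i ε F' G' * (fdist K i G' F' : ℝ) :=
            sum_congr rfl fun G' hG' => by rw [← sum_mul, hcol G' hG']
        _ ≤ _ := sum_pm_mul_le hwpos hε hF' (fun G' => (fdist K i G' F' : ℝ))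
            (by simp only [fdist_self, Nat.cast_zero])
            fun G' _ h => by exact_mod_cast fdist_le_one hF' h.symm
    have htri : (fdist K i F F' : ℝ) ≤
        ∑ G ∈ faces K i, ∑ G' ∈ faces K i, A G G' * (fdist K i F G : ℝ)
        + ∑ G ∈ faces K i, ∑ G' ∈ faces K i, A G G' * (fdist K i G G' : ℝ)
        + ∑ G ∈ faces K i, ∑ G' ∈ faces K i, A G G' * (fdist K i G' F' : ℝ) := by
      calc (fdist K i F F' : ℝ)
          = ∑ G ∈ faces K i, ∑ G' ∈ faces K i, A G G' * (fdist K i F F' : ℝ) := by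
            simp only [← sum_mul]
            rw [hmass, one_mul]
        _ ≤ ∑ G ∈ faces K i, ∑ G' ∈ faces K i, A G G' *
            ((fdist K i F G : ℝ) + fdist K i G G' + fdist K i G' F') := by
            refine sum_le_sum fun G hG => sum_le_sum fun G' hG' =>
              mul_le_mul_of_nonneg_left ?_ (hA G G')
            have h1 := fdist_triangle hconn hF hG hF'
            have h2 := fdist_triangle hconn hG hG' hF'
            exact_mod_cast (by omega :
              fdist K i F F' ≤ fdist K i F G + fdist K i G G' + fdist K i G' F')
        _ = _ := by simp only [mul_add, sum_add_distrib]
    linarith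

theorem fdist_pos (hconn : ComplexConnected K i) {F G : Finset V} (hF : F ∈ faces K i)
    (hG : G ∈ faces K i) (hne : F ≠ G) : 0 < fdist K i F G := by
  refine Nat.pos_of_ne_zero fun h0 => hne ?_
  have h := chain_fdist hconn hF hG
  rw [h0] at h
  exact h

end Aux

/-- For any `ε ∈ [0,1]` and any two distinct `i`-faces `F`, `F'`,
`κ_ε(F,F') ≤ (ε/d(F,F'))·(2 - (1/(i+1)) Σ_{E ∈ ∂F} w(F)/deg E
- (1/(i+1)) Σ_{E ∈ ∂F'} w(F')/deg E)`. -/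
theorem kappaEps_upper_bound {V : Type*} [Fintype V] [DecidableEq V]
    (K : Finset (Finset V)) (i : ℕ) (hi : 1 ≤ i)
    (hK : IsComplex K) (hconn : ComplexConnected K i)
    (w : Finset V → ℝ) (hwpos : ∀ F ∈ K, 0 < w F)
    (ε : ℝ) (hε : ε ∈ Set.Icc (0 : ℝ) 1)
    (F F' : Finset V) (hF : F ∈ faces K i) (hF' : F' ∈ faces K i) (hne : F ≠ F') :
    kappaEps K w i ε F F' ≤ ε / (fdist K i F F' : ℝ) *
      (2 - 1 / ((i : ℝ) + 1) * ∑ E ∈ F.powersetCard i, w F / deg K w i E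
         - 1 / ((i : ℝ) + 1) * ∑ E ∈ F'.powersetCard i, w F' / deg K w i E) := by
  have hd : (0 : ℝ) < fdist K i F F' := by exact_mod_cast fdist_pos hconn hF hF' hne
  have hW := le_Wass hconn hwpos hε hF hF'
  have hself : ∀ G : Finset V, pm K w i ε G G =
      1 - ε + ε / ((i : ℝ) + 1) * ∑ E ∈ G.powersetCard i, w G / deg K w i E := fun G => if_pos rfl
  rw [hself, hself] at hW
  unfold kappaEps
  rw [div_mul_eq_mul_div, one_sub_div hd.ne']
  refine div_le_div_of_nonneg_right ?_ hd.le
  rw [div_eq_mul_one_div ε] at hW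
  linarith

end
end SCRicci
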